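/- arXiv:2502.14772 — 5 statements merged into one kernel-verified Lean document; each statement's English description precedes it below -/
import Mathlib

section
/- Let k be a positive integer, β > 0, and z ∈ ℝ^k. Then E_{x ~ N(z, I_k)}[ F_{β,k}(x) ] · Z_{β,k} = z zᵀ · e^{−‖z‖²/(β√k+2)}, where the expectation of the matrix-valued function is taken entrywise. -/
open MeasureTheory

/-- The Gaussian measure `N(z, σ2 · I_k)` on `ℝ^k`, defined via its density
with respect to Lebesgue measure. -/
noncomputable def gaussian (k : ℕ) (z : EuclideanSpace ℝ (Fin k)) (σ2 : ℝ) :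
    Measure (EuclideanSpace ℝ (Fin k)) :=
  volume.withDensity fun x =>
    ENNReal.ofReal ((2 * Real.pi * σ2) ^ (-(k : ℝ) / 2) * Real.exp (-‖x - z‖ ^ 2 / (2 * σ2)))

/-- The normalization constant `Z_{β,k} = (1 + 2/(β√k))^{k/2+2}`. -/
noncomputable def Zconst (β : ℝ) (k : ℕ) : ℝ :=
  (1 + 2 / (β * Real.sqrt k)) ^ ((k : ℝ) / 2 + 2)

/-- The matrix `F_{β,k}(x) = (x xᵀ − (β√k/(β√k+2)) I_k) · e^{−‖x‖²/(β√k)}`. -/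
noncomputable def Fmat (β : ℝ) (k : ℕ) (x : EuclideanSpace ℝ (Fin k)) :
    Matrix (Fin k) (Fin k) ℝ :=
  Real.exp (-‖x‖ ^ 2 / (β * Real.sqrt k)) •
    (Matrix.of (fun i j => x i * x j)
      - (β * Real.sqrt k / (β * Real.sqrt k + 2)) • (1 : Matrix (Fin k) (Fin k) ℝ))

/-- The operator (spectral) norm of a real `k × k` matrix. -/
noncomputable def matOpNorm {k : ℕ} (A : Matrix (Fin k) (Fin k) ℝ) : ℝ :=
  ‖(Matrix.toEuclideanCLM (𝕜 := ℝ) A :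
      EuclideanSpace ℝ (Fin k) →L[ℝ] EuclideanSpace ℝ (Fin k))‖

/-- The quadratic form `vᵀ A v`. -/
def quadForm {k : ℕ} (A : Matrix (Fin k) (Fin k) ℝ) (v : EuclideanSpace ℝ (Fin k)) : ℝ :=
  ∑ i, ∑ j, v i * A i j * v j

/-- The bilinear form `vᵀ A u`. -/
def bilinForm {k : ℕ} (A : Matrix (Fin k) (Fin k) ℝ) (v u : EuclideanSpace ℝ (Fin k)) : ℝ :=
  ∑ i, ∑ j, v i * A i j * u j

open ProbabilityTheory
open scoped NNReal

/-- One-dimensional completion of the square. -/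
lemma oneD_aux (c : ℝ) (hc : 0 < c) (v : ℝ≥0) (hv : (v : ℝ) = c / (c + 2)) (w : ℝ) (f : ℝ → ℝ) :
    ∫ x : ℝ, Real.exp (-(x - w) ^ 2 / 2) * Real.exp (-x ^ 2 / c) * f x
      = Real.sqrt (2 * Real.pi * v) * Real.exp (-w ^ 2 / (c + 2)) *
        ∫ x, f x ∂(gaussianReal (v * w) v) := by
  have hv0 : (0 : ℝ) < v := by rw [hv]; positivity
  have hvne : v ≠ 0 := by rintro rfl; simp at hv0
  rw [integral_gaussianReal_eq_integral_smul hvne, ← integral_const_mul]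
  congr 1
  ext x
  have hs : Real.sqrt (2 * Real.pi * v) ≠ 0 := by positivity
  have he : Real.exp (-(x - w) ^ 2 / 2) * Real.exp (-x ^ 2 / c)
      = Real.exp (-w ^ 2 / (c + 2)) * Real.exp (-(x - v * w) ^ 2 / (2 * v)) := by
    rw [← Real.exp_add, ← Real.exp_add, hv]
    congr 1
    field_simp
    ring
  rw [he, gaussianPDFReal, smul_eq_mul]
  field_simp

lemma second_moment_aux (m : ℝ) (v : ℝ≥0) :
    ∫ x, (x ^ 2 - (v : ℝ)) ∂(gaussianReal m v) = m ^ 2 := by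
  have hm : MemLp (fun x : ℝ => x) 2 (gaussianReal m v) :=
    memLp_id_gaussianReal' 2 (by simp)
  have h := variance_eq_sub hm
  rw [variance_fun_id_gaussianReal, integral_id_gaussianReal] at h
  rw [integral_sub hm.integrable_sq (integrable_const _)]
  simp only [Pi.pow_apply] at h
  simp
  linarith

/-- The coordinate factors of `x i * x j - v δ_{ij}`. -/
noncomputable def coordFactor {k : ℕ} (v : ℝ) (i j l : Fin k) (x : ℝ) : ℝ :=
  if l = i then (if l = j then x ^ 2 - v else x) else if l = j then x else 1

lemma prod_coordFactor {k : ℕ} (v : ℝ) (i j : Fin k) (x : Fin k → ℝ) :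
    ∏ l, coordFactor v i j l (x l) = x i * x j - v * (1 : Matrix (Fin k) (Fin k) ℝ) i j := by
  by_cases h : i = j
  · subst h
    have : ∀ l, coordFactor v i i l (x l) = if l = i then x l ^ 2 - v else 1 := by
      intro l; unfold coordFactor; split_ifs <;> rfl
    simp [this, sq]
  · have : ∀ l, coordFactor v i j l (x l)
        = (if l = i then x l else 1) * (if l = j then x l else 1) := by
      intro l; unfold coordFactor; grind
    simp_rw [this]
    rw [Finset.prod_mul_distrib]
    simp [h]

lemma integral_coordFactor {k : ℕ} (v : ℝ≥0) (i j l : Fin k) (m : ℝ) :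
    ∫ x, coordFactor v i j l x ∂(gaussianReal m v)
      = (if l = i then m else 1) * (if l = j then m else 1) := by
  unfold coordFactor
  split_ifs
  · rw [second_moment_aux, sq]
  · simp [integral_id_gaussianReal]
  · simp [integral_id_gaussianReal]
  · simp

/-- For `z ∈ ℝ^k`,
`E_{x ~ N(z, I_k)}[F_{β,k}(x)] · Z_{β,k} = z zᵀ · e^{−‖z‖²/(β√k+2)}`, entrywise. -/
theorem expectation_Fmat (k : ℕ) (hk : 0 < k) (β : ℝ) (hβ : 0 < β)
    (z : EuclideanSpace ℝ (Fin k)) (i j : Fin k) :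
    (∫ x, Fmat β k x i j ∂(gaussian k z 1)) * Zconst β k
      = z i * z j * Real.exp (-‖z‖ ^ 2 / (β * Real.sqrt k + 2)) := by
  have hk' : (0 : ℝ) < k := by exact_mod_cast hk
  have hc : 0 < β * Real.sqrt k := by positivity
  unfold gaussian Zconst Fmat
  generalize β * Real.sqrt k = c at hc
  obtain ⟨v, hv⟩ : ∃ v : ℝ≥0, (v : ℝ) = c / (c + 2) := ⟨⟨c / (c + 2), by positivity⟩, rfl⟩
  have hv0 : (0 : ℝ) < v := by rw [hv]; positivity
  have hZ : 1 + 2 / c = (v : ℝ)⁻¹ := by rw [hv]; field_simp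
  rw [← hv, hZ]
  rw [integral_withDensity_eq_integral_toReal_smul (by fun_prop) (by simp)]
  have hint : ∀ x : EuclideanSpace ℝ (Fin k),
      (ENNReal.ofReal ((2 * Real.pi * 1) ^ (-(k : ℝ) / 2) *
        Real.exp (-‖x - z‖ ^ 2 / (2 * 1)))).toReal •
        (Real.exp (-‖x‖ ^ 2 / c) • (Matrix.of (fun i j => x i * x j)
      - (v : ℝ) • (1 : Matrix (Fin k) (Fin k) ℝ))) i j
      = (2 * Real.pi) ^ (-(k : ℝ) / 2) * ∏ l, (Real.exp (-(x l - z l) ^ 2 / 2) *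
          Real.exp (-x l ^ 2 / c) * coordFactor v i j l (x l)) := by
    intro x
    rw [ENNReal.toReal_ofReal (by positivity)]
    rw [Finset.prod_mul_distrib, Finset.prod_mul_distrib, prod_coordFactor,
      ← Real.exp_sum, ← Real.exp_sum, EuclideanSpace.norm_sq_eq, EuclideanSpace.norm_sq_eq]
    simp only [Matrix.smul_apply, Matrix.sub_apply, Matrix.of_apply, smul_eq_mul, mul_one,
      ← Finset.sum_div, Finset.sum_neg_distrib, Real.norm_eq_abs, sq_abs, PiLp.sub_apply]
    ring
  simp_rw [hint]
  rw [integral_const_mul, ← (PiLp.volume_preserving_toLp (Fin k)).integral_comp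
    (MeasurableEquiv.toLp 2 _).measurableEmbedding]
  simp only []
  rw [integral_fintype_prod_volume_eq_prod (fun l t => Real.exp (-(t - z l) ^ 2 / 2) *
          Real.exp (-t ^ 2 / c) * coordFactor (v : ℝ) i j l t)]
  simp_rw [oneD_aux c hc v hv, integral_coordFactor]
  rw [Finset.prod_mul_distrib, Finset.prod_mul_distrib, Finset.prod_mul_distrib,
    ← Real.exp_sum, ← Finset.sum_div, Finset.sum_neg_distrib, EuclideanSpace.norm_sq_eq]
  simp only [Finset.prod_ite_eq', Finset.mem_univ, if_true, Finset.prod_const, Finset.card_univ,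
    Fintype.card_fin, Real.norm_eq_abs, sq_abs]
  have hs : Real.sqrt (2 * Real.pi * v) ^ k
      = (2 * Real.pi) ^ ((k : ℝ) / 2) * (v : ℝ) ^ ((k : ℝ) / 2) := by
    rw [← Real.mul_rpow (by positivity) (by positivity), Real.sqrt_eq_rpow, ← Real.rpow_natCast,
      ← Real.rpow_mul (by positivity)]
    congr 1; ring
  have h1 : (2 * Real.pi) ^ (-(k : ℝ) / 2) * (2 * Real.pi) ^ ((k : ℝ) / 2) = 1 := by
    rw [← Real.rpow_add (by positivity)]
    ring_nf; simp
  have h2 : (v : ℝ) ^ ((k : ℝ) / 2) * (v : ℝ)⁻¹ ^ ((k : ℝ) / 2 + 2) * (v : ℝ) ^ 2 = 1 := by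
    rw [Real.inv_rpow hv0.le, ← Real.rpow_neg hv0.le, ← Real.rpow_natCast (v : ℝ) 2,
      ← Real.rpow_add hv0, ← Real.rpow_add hv0]
    ring_nf; simp
  rw [hs]
  generalize Real.exp _ = E
  linear_combination (z i * z j * E) * h2 + (z i * z j * E) * ((v : ℝ) ^ ((k : ℝ) / 2) * (v : ℝ)⁻¹ ^ ((k : ℝ) / 2 + 2) * (v : ℝ) ^ 2) * h1
end

section
/- There exists an absolute constant C > 0 such that the following holds. Let k be a positive integer and β > 0 with k > 1/β², let μ ∈ ℝ^k, and let u, v ∈ ℝ^k be unit vectors. If x ~ N(μ, I_k) and Y := vᵀ (Z_{β,k} F_{β,k}(x)) u, then Var[Y] ≤ C · e^{4/β²} · β² · k. -/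
open MeasureTheory

lemma gauss_real {k : ℕ} (b : ℝ) (hb : 0 < b) (w : EuclideanSpace ℝ (Fin k)) :
    ∫ x : EuclideanSpace ℝ (Fin k), Real.exp (-b * ‖x‖ ^ 2 + inner ℝ w x)
      = (Real.pi / b) ^ ((k : ℝ) / 2) * Real.exp (‖w‖ ^ 2 / (4 * b)) := by
  have h := GaussianFourier.integral_cexp_neg_mul_sq_norm_add (b := (b : ℂ))
    (by simpa using hb) 1 w
  rw [← Complex.ofReal_inj, ← integral_complex_ofReal]
  have hp : 0 ≤ Real.pi / b := by positivity
  push_cast [Complex.ofReal_cpow hp]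
  simpa using h

lemma gauss_integrable {k : ℕ} (b : ℝ) (hb : 0 < b) (w : EuclideanSpace ℝ (Fin k)) :
    Integrable (fun x : EuclideanSpace ℝ (Fin k) =>
      Real.exp (-b * ‖x‖ ^ 2 + inner ℝ w x)) := by
  by_contra hn
  have h := gauss_real b hb w
  rw [integral_undef hn] at h
  have : 0 < (Real.pi / b) ^ ((k : ℝ) / 2) * Real.exp (‖w‖ ^ 2 / (4 * b)) := by positivity
  linarith

/-- the Gaussian density -/
noncomputable def dens (k : ℕ) (z x : EuclideanSpace ℝ (Fin k)) : ℝ :=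
  (2 * Real.pi * 1) ^ (-(k : ℝ) / 2) * Real.exp (-‖x - z‖ ^ 2 / (2 * 1))

lemma dens_mul {k : ℕ} (z w x : EuclideanSpace ℝ (Fin k)) (c : ℝ) :
    dens k z x * Real.exp (-c * ‖x‖ ^ 2 + inner ℝ w x)
      = ((2 * Real.pi) ^ (-(k : ℝ) / 2) * Real.exp (-‖z‖ ^ 2 / 2)) *
        Real.exp (-(1 / 2 + c) * ‖x‖ ^ 2 + inner ℝ (z + w) x) := by
  unfold dens
  rw [mul_one, mul_one, mul_assoc, mul_assoc, ← Real.exp_add, ← Real.exp_add]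
  congr 2
  rw [norm_sub_sq_real, inner_add_left, real_inner_comm x z]
  ring

lemma dens_integrable {k : ℕ} (z w : EuclideanSpace ℝ (Fin k)) (c : ℝ) (hc : 0 ≤ c) :
    Integrable (fun x => dens k z x * Real.exp (-c * ‖x‖ ^ 2 + inner ℝ w x)) := by
  simp_rw [dens_mul]
  exact (gauss_integrable _ (by positivity) _).const_mul _

lemma dens_integral {k : ℕ} (z w : EuclideanSpace ℝ (Fin k)) (c : ℝ) (hc : 0 ≤ c) :
    ∫ x, dens k z x * Real.exp (-c * ‖x‖ ^ 2 + inner ℝ w x)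
      = (1 + 2 * c) ^ (-(k : ℝ) / 2) *
        Real.exp (‖z + w‖ ^ 2 / (2 * (1 + 2 * c)) - ‖z‖ ^ 2 / 2) := by
  simp_rw [dens_mul]
  rw [integral_const_mul, gauss_real _ (by positivity)]
  have h1 : Real.pi / (1 / 2 + c) = (2 * Real.pi) * (1 + 2 * c)⁻¹ := by
    field_simp
  have h2 : 0 < 1 + 2 * c := by positivity
  have h3 : (2 * Real.pi) ^ (-(k : ℝ) / 2) * (2 * Real.pi) ^ ((k : ℝ) / 2) = 1 := by
    rw [← Real.rpow_add (by positivity)]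
    ring_nf
    simp
  rw [h1, Real.mul_rpow (x := 2 * Real.pi) (y := (1 + 2 * c)⁻¹) (by positivity) (by positivity),
    Real.inv_rpow h2.le,
    ← Real.rpow_neg h2.le, sub_eq_add_neg, Real.exp_add]
  have h4 : ‖z + w‖ ^ 2 / (4 * (1 / 2 + c)) = ‖z + w‖ ^ 2 / (2 * (1 + 2 * c)) := by
    congr 1; ring
  rw [h4, ← neg_div, ← neg_div]
  linear_combination ((1 + 2 * c) ^ (-(k : ℝ) / 2) *
    Real.exp (‖z + w‖ ^ 2 / (2 * (1 + 2 * c))) * Real.exp (-‖z‖ ^ 2 / 2)) * h3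

lemma dens_nonneg {k : ℕ} (z x : EuclideanSpace ℝ (Fin k)) : 0 ≤ dens k z x := by
  unfold dens; positivity

lemma dens_meas {k : ℕ} (z : EuclideanSpace ℝ (Fin k)) : Measurable (dens k z) := by
  unfold dens; fun_prop

lemma gaussian_eq {k : ℕ} (z : EuclideanSpace ℝ (Fin k)) :
    gaussian k z 1 = volume.withDensity fun x => ENNReal.ofReal (dens k z x) := rfl

lemma gaussian_prob {k : ℕ} (z : EuclideanSpace ℝ (Fin k)) :
    IsProbabilityMeasure (gaussian k z 1) := by
  constructor
  have h1 := dens_integral z 0 0 le_rfl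
  have h2 := dens_integrable z 0 0 le_rfl
  simp at h1 h2
  rw [gaussian_eq, withDensity_apply _ MeasurableSet.univ, Measure.restrict_univ,
    ← ofReal_integral_eq_lintegral_ofReal h2 (Filter.Eventually.of_forall (dens_nonneg z)), h1]
  simp

lemma bilin_eq {k : ℕ} (β : ℝ) (x u v : EuclideanSpace ℝ (Fin k)) :
    bilinForm (Zconst β k • Fmat β k x) v u
      = Zconst β k * (Real.exp (-‖x‖ ^ 2 / (β * Real.sqrt k)) *
        (inner ℝ v x * inner ℝ u x
          - β * Real.sqrt k / (β * Real.sqrt k + 2) * inner ℝ v u)) := by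
  unfold bilinForm Fmat
  generalize Zconst β k = Z
  generalize Real.exp (-‖x‖ ^ 2 / (β * Real.sqrt k)) = e
  generalize β * Real.sqrt k / (β * Real.sqrt k + 2) = a
  have h1 : (inner ℝ v u : ℝ) = ∑ i, ∑ j, v i * (1 : Matrix (Fin k) (Fin k) ℝ) i j * u j := by
    simp [PiLp.inner_apply, Matrix.one_apply, mul_comm]
  have h2 : (inner ℝ v x * inner ℝ u x : ℝ) = ∑ i, ∑ j, v i * (x i * x j) * u j := by
    simp only [PiLp.inner_apply, Finset.sum_mul_sum]
    simp
    refine Finset.sum_congr rfl fun i _ => Finset.sum_congr rfl fun j _ => by ring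
  rw [h1, h2]
  simp only [Finset.mul_sum, ← Finset.sum_sub_distrib]
  refine Finset.sum_congr rfl fun i _ => Finset.sum_congr rfl fun j _ => ?_
  simp
  ring

lemma pow_four_le (y : ℝ) : y ^ 4 ≤ 24 * (Real.exp y + Real.exp (-y)) := by
  have h := Real.pow_div_factorial_le_exp |y| (abs_nonneg y) 4
  have h2 := Real.exp_abs_le y
  have h3 : |y| ^ 4 = y ^ 4 := by
    rw [show (4 : ℕ) = 2 * 2 from rfl, pow_mul, pow_mul, sq_abs]
  rw [h3] at h
  norm_num [Nat.factorial] at h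
  linarith

lemma two_le_exp (y : ℝ) : 2 ≤ Real.exp y + Real.exp (-y) := by
  linarith [Real.add_one_le_exp y, Real.add_one_le_exp (-y)]

lemma pointwise (s a c p q : ℝ) (hs : 1 ≤ s) (ha : |a * c| ≤ 1) :
    (p * q - a * c) ^ 2 ≤ 25 * s ^ 2 *
      ((Real.exp (p / √s) + Real.exp (-(p / √s))) + (Real.exp (q / √s) + Real.exp (-(q / √s)))) := by
  have hr : 0 < √s := Real.sqrt_pos.2 (by linarith)
  have h4 : (√s) ^ 4 = s ^ 2 := by
    rw [show (4 : ℕ) = 2 * 2 from rfl, pow_mul, Real.sq_sqrt (by linarith)]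
  have hp := pow_four_le (p / √s)
  have hq := pow_four_le (q / √s)
  have hp2 := two_le_exp (p / √s)
  rw [div_pow, h4, div_le_iff₀ (by positivity)] at hp hq
  have hac : (a * c) ^ 2 ≤ 1 := by rw [← sq_abs]; nlinarith [abs_nonneg (a * c)]
  have e1 : (p * q - a * c) ^ 2 ≤ p ^ 4 + q ^ 4 + 2 := by
    nlinarith [sq_nonneg (p * q + a * c), sq_nonneg (p ^ 2 - q ^ 2)]
  have hs2 : 1 ≤ s ^ 2 := by nlinarith
  have hq0 : 0 ≤ Real.exp (q / √s) + Real.exp (-(q / √s)) := by positivity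
  nlinarith [mul_nonneg (by positivity : 0 ≤ s ^ 2) hq0]

lemma exponent_le (s r t : ℝ) (hs : 0 < s) (hr : 0 ≤ r) (ht0 : 0 ≤ t) (ht : t ≤ r + 1 / √s) :
    t ^ 2 / (2 * (1 + 2 * (2 / s))) - r ^ 2 / 2 ≤ 1 / 8 := by
  have hq : 0 < √s := Real.sqrt_pos.2 hs
  have hq2 : √s ^ 2 = s := Real.sq_sqrt hs.le
  have h1 : t ^ 2 ≤ (r + 1 / √s) ^ 2 := by gcongr
  have h2 : s * t ^ 2 ≤ (r * √s + 1) ^ 2 := by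
    calc s * t ^ 2 ≤ s * (r + 1 / √s) ^ 2 := by gcongr
      _ = (√s * (r + 1 / √s)) ^ 2 := by rw [mul_pow, hq2]
      _ = _ := by congr 1; field_simp
  have h3 : t ^ 2 / (2 * (1 + 2 * (2 / s))) = s * t ^ 2 / (2 * (s + 4)) := by
    field_simp
    try ring
  rw [h3]
  have : s * t ^ 2 / (2 * (s + 4)) ≤ 1 / 8 + r ^ 2 / 2 := by
    rw [div_le_iff₀ (by positivity)]
    nlinarith [sq_nonneg (2 * r - √s / 2)]
  linarith

lemma zbound (s : ℝ) (hs : 1 ≤ s) (k : ℕ) :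
    ((1 + 2 / s) ^ ((k : ℝ) / 2 + 2)) ^ 2 * (1 + 2 * (2 / s)) ^ (-(k : ℝ) / 2)
      ≤ 81 * Real.exp (2 * k / s ^ 2) := by
  have h0 : 0 < s := by linarith
  have hA : 0 < 1 + 2 / s := by positivity
  have hB : 0 < 1 + 2 * (2 / s) := by positivity
  have h1 : (1 + 2 / s) ≤ 3 := by
    have : 2 / s ≤ 2 := by rw [div_le_iff₀ h0]; linarith
    linarith
  have e1 : ((1 + 2 / s) ^ ((k : ℝ) / 2 + 2)) ^ 2
      = ((1 + 2 / s) ^ 2) ^ ((k : ℝ) / 2) * (1 + 2 / s) ^ 4 := by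
    rw [Real.rpow_add hA, mul_pow, ← Real.rpow_natCast, ← Real.rpow_natCast, ← Real.rpow_natCast,
      ← Real.rpow_natCast, ← Real.rpow_mul hA.le, ← Real.rpow_mul hA.le, ← Real.rpow_mul hA.le]
    push_cast
    congr 2 <;> ring
  have e2 : (1 + 2 / s) ^ 2 ≤ (1 + 2 * (2 / s)) * Real.exp (4 / s ^ 2) := by
    have := Real.add_one_le_exp (4 / s ^ 2)
    have h5 : 0 ≤ 4 / s ^ 2 := by positivity
    have h6 : (1 + 2 / s) ^ 2 = (1 + 2 * (2 / s)) + 4 / s ^ 2 := by field_simp; ring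
    have h7 : 0 ≤ 2 * (2 / s) := by positivity
    rw [h6]
    nlinarith [mul_nonneg h5 h7]
  have e3 : ((1 + 2 / s) ^ 2) ^ ((k : ℝ) / 2)
      ≤ (1 + 2 * (2 / s)) ^ ((k : ℝ) / 2) * Real.exp (2 * k / s ^ 2) := by
    calc _ ≤ ((1 + 2 * (2 / s)) * Real.exp (4 / s ^ 2)) ^ ((k : ℝ) / 2) := by gcongr
      _ = _ := by
        rw [Real.mul_rpow hB.le (Real.exp_pos _).le, ← Real.exp_mul]
        congr 2; ring
  have e4 : (1 + 2 / s) ^ 4 ≤ 81 := by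
    calc _ ≤ (3 : ℝ) ^ 4 := by gcongr
      _ = 81 := by norm_num
  have e5 : (1 + 2 * (2 / s)) ^ ((k : ℝ) / 2) * (1 + 2 * (2 / s)) ^ (-(k : ℝ) / 2) = 1 := by
    rw [← Real.rpow_add hB]
    ring_nf
    simp
  rw [e1]
  calc _ ≤ ((1 + 2 * (2 / s)) ^ ((k : ℝ) / 2) * Real.exp (2 * k / s ^ 2) * 81)
        * (1 + 2 * (2 / s)) ^ (-(k : ℝ) / 2) := by gcongr
    _ = ((1 + 2 * (2 / s)) ^ ((k : ℝ) / 2) * (1 + 2 * (2 / s)) ^ (-(k : ℝ) / 2)) *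
        (81 * Real.exp (2 * k / s ^ 2)) := by ring
    _ = _ := by rw [e5, one_mul]

lemma term_le {k : ℕ} (s : ℝ) (hs : 1 ≤ s) (z w : EuclideanSpace ℝ (Fin k))
    (hw : ‖w‖ ≤ 1 / √s) :
    ∫ x, dens k z x * Real.exp (-(2 / s) * ‖x‖ ^ 2 + inner ℝ w x)
      ≤ (1 + 2 * (2 / s)) ^ (-(k : ℝ) / 2) * 2 := by
  have h0 : 0 < s := by linarith
  rw [dens_integral _ _ _ (by positivity)]
  gcongr
  have h1 := exponent_le s ‖z‖ ‖z + w‖ h0 (norm_nonneg _) (norm_nonneg _)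
    ((norm_add_le _ _).trans (by linarith))
  have h2 : Real.exp (1 / 8) ≤ 2 := by
    have : Real.exp (1 / 8) ≤ Real.exp (Real.log 2) :=
      Real.exp_le_exp.2 (by linarith [Real.log_two_gt_d9])
    rwa [Real.exp_log (by norm_num)] at this
  exact (Real.exp_le_exp.2 h1).trans h2

theorem variance_bound :
    ∃ C : ℝ, 0 < C ∧
      ∀ (k : ℕ) (β : ℝ), 0 < β → 1 / β ^ 2 < (k : ℝ) →
        ∀ (μ u v : EuclideanSpace ℝ (Fin k)), ‖u‖ = 1 → ‖v‖ = 1 →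
          ProbabilityTheory.variance
              (fun x => bilinForm (Zconst β k • Fmat β k x) v u) (gaussian k μ 1)
            ≤ C * Real.exp (4 / β ^ 2) * β ^ 2 * k := by
  refine ⟨25 * 8 * 81, by norm_num, ?_⟩
  intro k β hβ hk μ u v hu hv
  have hprob := gaussian_prob μ
  have hk0 : (0 : ℝ) < k := lt_trans (by positivity) hk
  set s := β * √(k : ℝ) with hsdef
  have hs2 : s ^ 2 = β ^ 2 * k := by rw [hsdef, mul_pow, Real.sq_sqrt hk0.le]
  have hs0 : 0 < s := by positivity
  have hs : 1 ≤ s := by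
    rw [div_lt_iff₀ (by positivity)] at hk
    nlinarith
  have hr : 0 < √s := Real.sqrt_pos.2 hs0
  have hmeas : Measurable (fun x => bilinForm (Zconst β k • Fmat β k x) v u) := by
    simp_rw [bilin_eq]
    fun_prop
  refine (ProbabilityTheory.variance_le_expectation_sq hmeas.aestronglyMeasurable).trans ?_
  rw [gaussian_eq, integral_withDensity_eq_integral_toReal_smul
    (dens_meas μ).ennreal_ofReal (Filter.Eventually.of_forall fun _ => ENNReal.ofReal_lt_top)]
  set G : EuclideanSpace ℝ (Fin k) → EuclideanSpace ℝ (Fin k) → ℝ :=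
    fun w x => dens k μ x * Real.exp (-(2 / s) * ‖x‖ ^ 2 + inner ℝ w x) with hG
  have hGi : ∀ w, Integrable (G w) := fun w => dens_integrable μ w _ (by positivity)
  set w1 := (1 / √s) • v with hw1
  set w2 := (1 / √s) • u with hw2
  have hn1 : ‖w1‖ ≤ 1 / √s := by rw [hw1, norm_smul, hv, Real.norm_of_nonneg (by positivity)]; simp
  have hn2 : ‖w2‖ ≤ 1 / √s := by rw [hw2, norm_smul, hu, Real.norm_of_nonneg (by positivity)]; simp
  set K := 25 * s ^ 2 * Zconst β k ^ 2 with hK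
  have hpt : ∀ x, (ENNReal.ofReal (dens k μ x)).toReal •
      ((fun x => bilinForm (Zconst β k • Fmat β k x) v u) ^ 2) x
      ≤ K * ((G w1 x + G (-w1) x) + (G w2 x + G (-w2) x)) := by
    intro x
    have hac : |s / (s + 2) * (inner ℝ v u : ℝ)| ≤ 1 := by
      rw [abs_mul]
      have i1 : |(inner ℝ v u : ℝ)| ≤ 1 := by
        have := abs_real_inner_le_norm v u
        rwa [hu, hv, one_mul] at this
      have i2 : |s / (s + 2)| ≤ 1 := by
        rw [abs_of_nonneg (by positivity), div_le_one (by positivity)]; linarith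
      exact mul_le_one₀ i2 (abs_nonneg _) i1
    have hp := pointwise s (s / (s + 2)) (inner ℝ v u) (inner ℝ v x) (inner ℝ u x) hs hac
    rw [ENNReal.toReal_ofReal (dens_nonneg _ _), smul_eq_mul, Pi.pow_apply]
    simp only [bilin_eq]
    rw [← hsdef, mul_pow, mul_pow]
    have hE : Real.exp (-‖x‖ ^ 2 / s) ^ 2 = Real.exp (-(2 / s) * ‖x‖ ^ 2) := by
      rw [← Real.exp_nat_mul]; congr 1; push_cast; ring
    have a1 : (inner ℝ w1 x : ℝ) = inner ℝ v x / √s := by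
      rw [hw1, real_inner_smul_left]; ring
    have a2 : (inner ℝ w2 x : ℝ) = inner ℝ u x / √s := by
      rw [hw2, real_inner_smul_left]; ring
    simp only [hG, inner_neg_left, a1, a2, Real.exp_add, hE]
    have hc : 0 ≤ dens k μ x * (Zconst β k ^ 2 * Real.exp (-(2 / s) * ‖x‖ ^ 2)) :=
      mul_nonneg (dens_nonneg _ _) (by positivity)
    have := mul_le_mul_of_nonneg_left hp hc
    rw [hK]
    linarith
  have hbdI : Integrable (fun x => K * ((G w1 x + G (-w1) x) + (G w2 x + G (-w2) x))) :=
    (((hGi _).add (hGi _)).add ((hGi _).add (hGi _))).const_mul K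
  refine (integral_mono_of_nonneg (Filter.Eventually.of_forall fun x => ?_) hbdI
    (Filter.Eventually.of_forall hpt)).trans ?_
  · exact mul_nonneg ENNReal.toReal_nonneg (sq_nonneg _)
  have hsum : ∫ x, ((G w1 x + G (-w1) x) + (G w2 x + G (-w2) x))
      = ((∫ x, G w1 x) + ∫ x, G (-w1) x) + ((∫ x, G w2 x) + ∫ x, G (-w2) x) := by
    rw [← integral_add (hGi w1) (hGi (-w1)), ← integral_add (hGi w2) (hGi (-w2))]
    exact integral_add ((hGi w1).add (hGi (-w1))) ((hGi w2).add (hGi (-w2)))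
  rw [integral_const_mul, hsum]
  have t1 := term_le s hs μ w1 hn1
  have t2 := term_le s hs μ (-w1) (by rwa [norm_neg])
  have t3 := term_le s hs μ w2 hn2
  have t4 := term_le s hs μ (-w2) (by rwa [norm_neg])
  have hK0 : 0 ≤ K := by positivity
  have hZ := zbound s hs k
  have hZ' : Zconst β k ^ 2 * (1 + 2 * (2 / s)) ^ (-(k : ℝ) / 2) ≤ 81 * Real.exp (4 / β ^ 2) := by
    refine hZ.trans ?_
    refine mul_le_mul_of_nonneg_left (Real.exp_le_exp.2 ?_) (by norm_num)
    rw [hs2, div_le_div_iff₀ (by positivity) (by positivity)]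
    nlinarith [mul_pos (pow_pos hβ 2) hk0]
  calc _ ≤ K * (8 * (1 + 2 * (2 / s)) ^ (-(k : ℝ) / 2)) := by
        apply mul_le_mul_of_nonneg_left _ hK0
        simp only [hG]
        linarith
    _ = 25 * 8 * s ^ 2 * (Zconst β k ^ 2 * (1 + 2 * (2 / s)) ^ (-(k : ℝ) / 2)) := by
        rw [hK]; ring
    _ ≤ 25 * 8 * s ^ 2 * (81 * Real.exp (4 / β ^ 2)) := by gcongr
    _ = _ := by rw [hs2]; ring
end

section
/- Let k be a positive integer, β > 0, μ ∈ ℝ^k, u, v ∈ ℝ^k unit vectors, and p ≥ 1 a real number. Set c := 2p/(β√k) + 1. If x ~ N(μ, I_k) and Y := vᵀ (Z_{β,k} F_{β,k}(x)) u, then E[|Y|^p] = (Z_{β,k})^p · e^{−p‖μ‖²/(2p+β√k)} · (1 + 2p/(β√k))^{−k/2} · E_{y ~ N(μ/c, (1/c) I_k)}[ | (vᵀy)(uᵀy) − (β√k/(2+β√k)) vᵀu |^p ]. -/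
open MeasureTheory

lemma integral_gaussian_aux (k : ℕ) (z : EuclideanSpace ℝ (Fin k)) (s : ℝ) (hs : 0 < s)
    (f : EuclideanSpace ℝ (Fin k) → ℝ) :
    ∫ x, f x ∂(gaussian k z s) =
      ∫ x, ((2 * Real.pi * s) ^ (-(k : ℝ) / 2) * Real.exp (-‖x - z‖ ^ 2 / (2 * s))) * f x := by
  unfold gaussian
  rw [integral_withDensity_eq_integral_toReal_smul (by fun_prop) (by simp)]
  refine integral_congr_ae (Filter.Eventually.of_forall fun x => ?_)
  have : 0 ≤ (2 * Real.pi * s) ^ (-(k : ℝ) / 2) * Real.exp (-‖x - z‖ ^ 2 / (2 * s)) := by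
    positivity
  simp only [ENNReal.toReal_ofReal this, smul_eq_mul]

lemma bilin_aux (β Z : ℝ) (k : ℕ) (x u v : EuclideanSpace ℝ (Fin k)) :
    bilinForm (Z • Fmat β k x) v u = Z * (Real.exp (-‖x‖ ^ 2 / (β * Real.sqrt k)) *
      ((∑ i, v i * x i) * (∑ i, u i * x i)
        - (β * Real.sqrt k / (2 + β * Real.sqrt k)) * (∑ i, v i * u i))) := by
  unfold bilinForm Fmat
  generalize Real.exp (-‖x‖ ^ 2 / (β * Real.sqrt k)) = e
  rw [add_comm 2 (β * Real.sqrt k)]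
  generalize β * Real.sqrt k / (β * Real.sqrt k + 2) = d
  have h1 : ∀ i j, v i * (Z • e • (Matrix.of (fun i j => x i * x j)
      - d • (1 : Matrix (Fin k) (Fin k) ℝ))) i j * u j
      = Z * e * ((v i * x i) * (u j * x j)) - Z * e * d * (if i = j then v i * u j else 0) := by
    intro i j
    simp only [Matrix.smul_apply, Matrix.sub_apply, Matrix.of_apply, Matrix.one_apply, smul_eq_mul]
    split_ifs <;> ring
  simp_rw [h1, Finset.sum_sub_distrib, ← Finset.mul_sum, Finset.sum_ite_eq, Finset.mem_univ,
    if_true, ← Finset.sum_mul]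
  ring

/-- For `c = 2p/(β√k) + 1`, `x ~ N(μ, I_k)` and
`Y = vᵀ (Z_{β,k} F_{β,k}(x)) u`,
`E[|Y|^p] = Z_{β,k}^p · e^{−p‖μ‖²/(2p+β√k)} · (1+2p/(β√k))^{−k/2}
  · E_{y ~ N(μ/c, (1/c) I_k)}[ |(vᵀy)(uᵀy) − (β√k/(2+β√k)) vᵀu|^p ]`. -/
theorem moment_identity (k : ℕ) (hk : 0 < k) (β : ℝ) (hβ : 0 < β)
    (μ u v : EuclideanSpace ℝ (Fin k)) (hu : ‖u‖ = 1) (hv : ‖v‖ = 1)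
    (p : ℝ) (hp : 1 ≤ p) :
    ∫ x, |bilinForm (Zconst β k • Fmat β k x) v u| ^ p ∂(gaussian k μ 1)
      = (Zconst β k) ^ p * Real.exp (-p * ‖μ‖ ^ 2 / (2 * p + β * Real.sqrt k))
          * (1 + 2 * p / (β * Real.sqrt k)) ^ (-(k : ℝ) / 2)
          * ∫ y, |(∑ i, v i * y i) * (∑ i, u i * y i)
                - (β * Real.sqrt k / (2 + β * Real.sqrt k)) * (∑ i, v i * u i)| ^ p
              ∂(gaussian k ((2 * p / (β * Real.sqrt k) + 1)⁻¹ • μ)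
                  ((2 * p / (β * Real.sqrt k) + 1)⁻¹)) := by
  have hk' : (0 : ℝ) < Real.sqrt k := Real.sqrt_pos.2 (by exact_mod_cast hk)
  have hZ : 0 ≤ Zconst β k := by unfold Zconst; positivity
  simp_rw [bilin_aux]
  generalize Zconst β k = Z at *
  have hB : 0 < β * Real.sqrt k := mul_pos hβ hk'
  generalize β * Real.sqrt k = B at *
  have hp0 : 0 < p := by linarith
  rw [add_comm (1 : ℝ) (2 * p / B)]
  obtain ⟨c, hc⟩ : ∃ c, c = 2 * p / B + 1 := ⟨_, rfl⟩
  have hc0 : 0 < c := by rw [hc]; positivity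
  rw [← hc, integral_gaussian_aux _ _ _ one_pos, integral_gaussian_aux _ _ _ (inv_pos.2 hc0),
    ← integral_const_mul]
  refine integral_congr_ae (Filter.Eventually.of_forall fun x => ?_)
  simp only
  generalize (∑ i, v i * x i) * (∑ i, u i * x i) - (B / (2 + B)) * (∑ i, v i * u i) = q
  rw [abs_mul, abs_mul, abs_of_nonneg hZ, Real.abs_exp, Real.mul_rpow hZ (by positivity),
    Real.mul_rpow (Real.exp_pos _).le (abs_nonneg q), ← Real.exp_mul,
    Real.mul_rpow (y := c⁻¹) (by positivity) (inv_pos.2 hc0).le, Real.inv_rpow hc0.le,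
    mul_one (2 * Real.pi)]
  have hcp : c ^ (-(k : ℝ) / 2) ≠ 0 := (Real.rpow_pos_of_pos hc0 _).ne'
  have hexp : Real.exp (-‖x - μ‖ ^ 2 / (2 * 1)) * Real.exp (-‖x‖ ^ 2 / B * p)
      = Real.exp (-p * ‖μ‖ ^ 2 / (2 * p + B)) *
        Real.exp (-‖x - c⁻¹ • μ‖ ^ 2 / (2 * c⁻¹)) := by
    rw [← Real.exp_add, ← Real.exp_add]
    congr 1
    rw [norm_sub_sq_real, norm_sub_sq_real, norm_smul, inner_smul_right, Real.norm_eq_abs,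
      mul_pow, sq_abs]
    have h2 : 2 * p + B = B * c := by rw [hc]; field_simp
    have h3 : p = B * (c - 1) / 2 := by rw [hc]; field_simp; ring
    rw [h2, h3]
    field_simp
    ring
  calc _ = (2 * Real.pi) ^ (-(k : ℝ) / 2) * Z ^ p * |q| ^ p *
        (Real.exp (-‖x - μ‖ ^ 2 / (2 * 1)) * Real.exp (-‖x‖ ^ 2 / B * p)) := by ring_nf
    _ = _ := by
      rw [hexp]
      field_simp
end

section
/- Let k be an integer with k > 10. Then for every x ∈ ℝ^k: ( ‖x‖² − k·√(k·log k)/(√(k·log k)+2) ) · exp( −(‖x‖² − k)/√(k·log k) ) ≤ 3·√(k·log k). -/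
/-- For an integer `k > 10` and every `x ∈ ℝ^k`:
`(‖x‖² − k√(k log k)/(√(k log k)+2)) · exp(−(‖x‖² − k)/√(k log k)) ≤ 3√(k log k)`. -/
theorem trace_term_bound (k : ℕ) (hk : 10 < k) :
    ∀ x : EuclideanSpace ℝ (Fin k),
      (‖x‖ ^ 2 - k * Real.sqrt (k * Real.log k) / (Real.sqrt (k * Real.log k) + 2))
          * Real.exp (-(‖x‖ ^ 2 - k) / Real.sqrt (k * Real.log k))
        ≤ 3 * Real.sqrt (k * Real.log k) := by
  intro x
  have hk' : (10 : ℝ) < k := by exact_mod_cast hk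
  have he := Real.exp_one_lt_d9
  have hlog : 1 ≤ Real.log k := by
    rw [Real.le_log_iff_exp_le (by linarith)]
    linarith
  have hpos : 0 < (k : ℝ) * Real.log k := by positivity
  have hs : 0 < Real.sqrt (k * Real.log k) := Real.sqrt_pos.mpr hpos
  have hsq : (k : ℝ) ≤ Real.sqrt (k * Real.log k) ^ 2 := by
    rw [Real.sq_sqrt hpos.le]
    nlinarith
  generalize Real.sqrt (k * Real.log k) = s at hs hsq ⊢
  generalize ‖x‖ ^ 2 = t
  generalize (k : ℝ) = K at *
  have h1 : (t - K * s / (s + 2)) ≤ s * Real.exp ((t - K * s / (s + 2)) / s - 1) := by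
    have h := Real.add_one_le_exp ((t - K * s / (s + 2)) / s - 1)
    have h2 : (t - K * s / (s + 2)) = s * ((t - K * s / (s + 2)) / s - 1 + 1) := by
      field_simp
      ring
    calc _ = _ := h2
      _ ≤ _ := mul_le_mul_of_nonneg_left h hs.le
  calc _ ≤ s * Real.exp ((t - K * s / (s + 2)) / s - 1) * Real.exp (-(t - K) / s) :=
        mul_le_mul_of_nonneg_right h1 (Real.exp_pos _).le
    _ = s * Real.exp (2 * K / (s * (s + 2)) - 1) := by
        rw [mul_assoc, ← Real.exp_add]
        congr 2
        field_simp
        ring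
    _ ≤ s * Real.exp 1 := by
        gcongr
        rw [sub_le_iff_le_add, div_le_iff₀ (by positivity)]
        nlinarith
    _ ≤ 3 * s := by nlinarith
end

section
/- Let k be an integer with k > 10, let n be a positive integer, and let x_1,…,x_n ∈ ℝ^k be arbitrary points. Set β := √(log k) and Â := (1/n) Σ_{i=1}^n Z_{β,k} F_{β,k}(x_i). Then tr(Â) ≤ 18·√(k·log k). -/
open MeasureTheory

lemma scalar_bound (k B s L : ℝ) (hk : 11 ≤ k) (hL : 2 ≤ L) (hB : 0 < B) (hB2 : B ^ 2 = k * L) :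
    (1 + 2 / B) ^ (k / 2 + 2) * (Real.exp (-s / B) * (s - B / (B + 2) * k)) ≤ 18 * B := by
  have hB3 : 3 ≤ B := by nlinarith
  have h1 : (1 + 2 / B) ^ (k / 2 + 2) ≤ Real.exp (2 / B * (k / 2 + 2)) := by
    rw [Real.exp_mul]
    apply Real.rpow_le_rpow (by positivity) _ (by positivity)
    linarith [Real.add_one_le_exp (2 / B)]
  set c := B / (B + 2) * k with hc
  have h2 : s - c ≤ B * Real.exp ((s - c) / B - 1) := by
    have := Real.add_one_le_exp ((s - c) / B - 1)
    have h3 : (s - c) / B ≤ Real.exp ((s - c) / B - 1) := by linarith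
    rw [div_le_iff₀ hB] at h3
    linarith
  have h4 : Real.exp (-s / B) * (s - c) ≤ B * Real.exp (-c / B - 1) := by
    calc _ ≤ Real.exp (-s / B) * (B * Real.exp ((s - c) / B - 1)) := by gcongr
      _ = B * (Real.exp (-s / B) * Real.exp ((s - c) / B - 1)) := by ring
      _ = _ := by rw [← Real.exp_add]; congr 2; ring
  have h5 : 2 / B * (k / 2 + 2) + (-c / B - 1) ≤ 2 := by
    have e : 2 / B * (k / 2 + 2) + (-c / B - 1) = 2 * k / (B * (B + 2)) + 4 / B - 1 := by
      rw [hc]; field_simp; ring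
    have a : 2 * k / (B * (B + 2)) ≤ 1 := by
      rw [div_le_one (by positivity)]; nlinarith
    have b : 4 / B ≤ 2 := by rw [div_le_iff₀ hB]; linarith
    linarith
  have h6 : Real.exp 2 ≤ 18 := by
    have : Real.exp 2 = Real.exp 1 * Real.exp 1 := by rw [← Real.exp_add]; norm_num
    nlinarith [Real.exp_one_lt_d9, Real.exp_pos 1]
  calc _ ≤ (1 + 2 / B) ^ (k / 2 + 2) * (B * Real.exp (-c / B - 1)) := by gcongr
    _ ≤ Real.exp (2 / B * (k / 2 + 2)) * (B * Real.exp (-c / B - 1)) := by gcongr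
    _ = Real.exp (2 / B * (k / 2 + 2) + (-c / B - 1)) * B := by rw [Real.exp_add]; ring
    _ ≤ 18 * B := by
      gcongr
      exact (Real.exp_le_exp.mpr h5).trans h6

/-- For an integer `k > 10`, a positive integer `n`, arbitrary points
`x_1, …, x_n ∈ ℝ^k`, and `β = √(log k)`, the empirical matrix
`Â = (1/n) Σ_i Z_{β,k} F_{β,k}(x_i)` satisfies `tr(Â) ≤ 18 √(k log k)`. -/
theorem trace_bound (k n : ℕ) (hk : 10 < k) (hn : 0 < n)
    (x : Fin n → EuclideanSpace ℝ (Fin k)) :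
    Matrix.trace ((n : ℝ)⁻¹ •
        ∑ i, Zconst (Real.sqrt (Real.log k)) k • Fmat (Real.sqrt (Real.log k)) k (x i))
      ≤ 18 * Real.sqrt (k * Real.log k) := by
  have hkR : (11 : ℝ) ≤ k := by exact_mod_cast hk
  have hL : 2 ≤ Real.log k := by
    rw [Real.le_log_iff_exp_le (by linarith)]
    have : Real.exp 2 = Real.exp 1 * Real.exp 1 := by rw [← Real.exp_add]; norm_num
    nlinarith [Real.exp_one_lt_d9, Real.exp_pos 1]
  have hBe : Real.sqrt (Real.log k) * Real.sqrt k = Real.sqrt (k * Real.log k) := by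
    rw [Real.sqrt_mul (by linarith)]; ring
  have hpos : 0 < (k : ℝ) * Real.log k := by positivity
  have key : ∀ i, Matrix.trace (Zconst (Real.sqrt (Real.log k)) k •
      Fmat (Real.sqrt (Real.log k)) k (x i)) ≤ 18 * Real.sqrt (k * Real.log k) := by
    intro i
    have ht : Matrix.trace (Matrix.of (fun a b => x i a * x i b)) = ‖x i‖ ^ 2 := by
      rw [EuclideanSpace.real_norm_sq_eq]
      simp [Matrix.trace, pow_two]
    unfold Zconst Fmat
    rw [hBe, Matrix.trace_smul, Matrix.trace_smul, Matrix.trace_sub, Matrix.trace_smul, ht,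
      Matrix.trace_one, Fintype.card_fin]
    exact scalar_bound k _ _ _ hkR hL (Real.sqrt_pos.mpr hpos) (Real.sq_sqrt hpos.le)
  have hn' : (0 : ℝ) < n := by exact_mod_cast hn
  rw [Matrix.trace_smul, Matrix.trace_sum, smul_eq_mul, inv_mul_le_iff₀ hn']
  calc _ ≤ ∑ _i : Fin n, 18 * Real.sqrt (k * Real.log k) := Finset.sum_le_sum fun i _ => key i
    _ = _ := by simp
end
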